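/- In the n-rank Taft algebra, the comultiplication satisfies Δ(x^γ K(α)) = Σ_{ξ ≤ γ} (γ choose ξ)_q q^{-(γ-ξ)*ξ} x^{γ-ξ} K(ξ+α) ⊗ x^ξ K(α), where (γ choose ξ)_q = ∏_i (γ_i choose ξ_i)_q is the product of Gaussian binomial coefficients. -/

import Mathlib

open scoped TensorProduct

def starForm {n : ℕ} (α β : Fin n → ℤ) : ℤ :=
  ∑ j : Fin n, ∑ i : Fin n, if (j : ℕ) < (i : ℕ) then α i * β j else 0

noncomputable def theta {k : Type*} [Field k] (q : k) {n : ℕ} (α β : Fin n → ℤ) : k :=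
  q ^ (starForm α β - starForm β α)

def epsZ {n : ℕ} (i : Fin n) : Fin n → ℤ := fun j => if j = i then 1 else 0

/-- The ordered monomial `x^γ = x_1^{γ_1} ⋯ x_n^{γ_n}` built from a family `x`. -/
def xpow {A : Type*} [Ring A] {n : ℕ} (x : Fin n → A) (γ : Fin n → ℕ) : A :=
  ((List.finRange n).map (fun i => x i ^ γ i)).prod

/-- A presentation of the `n`-rank Taft algebra inside a Hopf algebra `A`
(generators `K(α)`, `x_i` and the defining relations, together with the values of
the comultiplication, counit and antipode on the generators).  The scalar `t`
is the parameter used in the skew bicharacter `θ`: for the `n`-rank Taft algebra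
`𝒜̄_q(n)` one takes `t = q`, while `t = 1` gives the presentation of the `n`-fold
tensor power of the Taft algebra (the rank-`n` Taft algebra `𝒜̄_q(1)^{⊗n}`). -/
structure TaftPresentation (k : Type*) [Field k] (A : Type*) [Ring A]
    [HopfAlgebra k A] (n ℓ : ℕ) (q t : k) where
  K : (Fin n → ℤ) → A
  x : Fin n → A
  K_zero : K 0 = 1
  K_add : ∀ α β, K α * K β = K (α + β)
  K_ell : ∀ i, K (epsZ i) ^ ℓ = 1
  K_x : ∀ i j, K (epsZ i) * x j
      = (theta t (epsZ i) (epsZ j) * if i = j then q else 1) • (x j * K (epsZ i))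
  x_x : ∀ i j, x i * x j = theta t (epsZ i) (epsZ j) • (x j * x i)
  x_ell : ∀ i, x i ^ ℓ = 0
  comul_K : ∀ α, Coalgebra.comul (R := k) (K α) = K α ⊗ₜ[k] K α
  comul_x : ∀ i, Coalgebra.comul (R := k) (x i) = x i ⊗ₜ[k] 1 + K (epsZ i) ⊗ₜ[k] x i
  counit_K : ∀ α, Coalgebra.counit (R := k) (K α) = 1
  counit_x : ∀ i, Coalgebra.counit (R := k) (x i) = 0
  antipode_K : ∀ α, HopfAlgebra.antipode (R := k) (K α) = K (-α)
  antipode_x : ∀ i, HopfAlgebra.antipode (R := k) (x i) = -(K (-epsZ i) * x i)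

namespace TaftPresentation

variable {k : Type*} [Field k] {A : Type*} [Ring A] [HopfAlgebra k A]
  {n ℓ : ℕ} {q t : k}

/-- The basis monomial `x^γ K(α)`. -/
def mono (T : TaftPresentation k A n ℓ q t) (γ α : Fin n → Fin ℓ) : A :=
  xpow T.x (fun i => (γ i : ℕ)) * T.K (fun i => (α i : ℤ))

end TaftPresentation

/-- The Gauss integer `(m)_q = 1 + q + ⋯ + q^{m-1}`. -/
def qInt {k : Type*} [Field k] (q : k) (m : ℕ) : k := ∑ i ∈ Finset.range m, q ^ i

/-- The Gauss factorial `(m)_q! = (1)_q (2)_q ⋯ (m)_q`. -/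
def qFac {k : Type*} [Field k] (q : k) (m : ℕ) : k := ∏ i ∈ Finset.range m, qInt q (i + 1)

/-- The Gaussian binomial coefficient `(m choose j)_q`. -/
noncomputable def qBinom {k : Type*} [Field k] (q : k) (m j : ℕ) : k :=
  qFac q m / (qFac q (m - j) * qFac q j)


namespace TaftAux

/-- Gaussian binomials by the Pascal recursion. -/
def pas {k : Type*} [Field k] (q : k) : ℕ → ℕ → k
  | _, 0 => 1
  | 0, _ + 1 => 0
  | m + 1, j + 1 => q ^ (j + 1) * pas q m (j + 1) + pas q m j

theorem pas_zero {k : Type*} [Field k] (q : k) (m : ℕ) : pas q m 0 = 1 := by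
  cases m <;> rfl

theorem pas_succ {k : Type*} [Field k] (q : k) (m j : ℕ) :
    pas q (m + 1) (j + 1) = q ^ (j + 1) * pas q m (j + 1) + pas q m j := rfl

theorem pas_gt {k : Type*} [Field k] (q : k) (m : ℕ) : ∀ j, m < j → pas q m j = 0 := by
  induction m with
  | zero => intro j hj; cases j with
    | zero => omega
    | succ j => rfl
  | succ m ih => intro j hj; cases j with
    | zero => omega
    | succ j => rw [pas_succ, ih _ (by omega), ih _ (by omega)]; simp

theorem qInt_add {k : Type*} [Field k] (q : k) (a b : ℕ) :
    qInt q (a + b) = qInt q a + q ^ a * qInt q b := by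
  unfold qInt
  rw [Finset.sum_range_add, Finset.mul_sum]
  simp [pow_add]

theorem qFac_succ {k : Type*} [Field k] (q : k) (m : ℕ) :
    qFac q (m + 1) = qFac q m * qInt q (m + 1) := by
  unfold qFac
  rw [Finset.prod_range_succ]

theorem qFac_zero {k : Type*} [Field k] (q : k) : qFac q 0 = 1 := by simp [qFac]

theorem pas_mul {k : Type*} [Field k] (q : k) (m : ℕ) :
    ∀ i j, i + j = m → pas q m j * (qFac q i * qFac q j) = qFac q m := by
  induction m with
  | zero => 
    intro i j h
    obtain ⟨rfl, rfl⟩ : i = 0 ∧ j = 0 := by omega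
    simp [pas_zero, qFac_zero]
  | succ m ih =>
    intro i j h
    cases j with
    | zero => 
      obtain rfl : i = m + 1 := by omega
      simp [pas_zero, qFac_zero]
    | succ j =>
      rw [pas_succ]
      cases i with
      | zero =>
        obtain rfl : j = m := by omega
        have := ih 0 j (by omega)
        rw [pas_gt q j (j+1) (by omega), qFac_succ]
        linear_combination (qInt q (j+1)) * this
      | succ i =>
        have h1 := ih i (j+1) (by omega)
        have h2 := ih (i+1) j (by omega)
        have h3 : qInt q (m+1) = qInt q (j+1) + q^(j+1) * qInt q (i+1) := by
          rw [← qInt_add]; congr 1; omega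
        rw [qFac_succ q m, h3, qFac_succ q i, qFac_succ q j]
        rw [qFac_succ] at h1 h2
        linear_combination (q^(j+1) * qInt q (i+1)) * h1 + qInt q (j+1) * h2

theorem qInt_ne {k : Type*} [Field k] {q : k} {ℓ : ℕ} (hq : IsPrimitiveRoot q ℓ)
    (m : ℕ) (h0 : 0 < m) (h : m < ℓ) : qInt q m ≠ 0 := by
  intro h1
  have := geom_sum_mul q m
  unfold qInt at h1
  rw [h1, zero_mul] at this
  exact hq.pow_ne_one_of_pos_of_lt h0.ne' h (sub_eq_zero.mp this.symm)

theorem qFac_ne {k : Type*} [Field k] {q : k} {ℓ : ℕ} (hq : IsPrimitiveRoot q ℓ)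
    (m : ℕ) (h : m < ℓ) : qFac q m ≠ 0 := by
  unfold qFac
  rw [Finset.prod_ne_zero_iff]
  intro i hi
  rw [Finset.mem_range] at hi
  exact qInt_ne hq _ (by omega) (by omega)

theorem pas_eq {k : Type*} [Field k] {q : k} {ℓ : ℕ} (hq : IsPrimitiveRoot q ℓ)
    (m j : ℕ) (h : m < ℓ) (hj : j ≤ m) : pas q m j = qBinom q m j := by
  unfold qBinom
  rw [eq_div_iff (mul_ne_zero (qFac_ne hq _ (by omega)) (qFac_ne hq _ (by omega)))]
  exact pas_mul q m _ _ (by omega)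

section comm
variable {k : Type*} [Field k] {B : Type*} [Ring B] [Algebra k B]

theorem pow_comm1 (c : k) (x y : B) (h : y * x = c • (x * y)) (b : ℕ) :
    y ^ b * x = c ^ b • (x * y ^ b) := by
  induction b with
  | zero => simp
  | succ b ih =>
    rw [pow_succ' y, mul_assoc, ih, mul_smul_comm, ← mul_assoc, h, smul_mul_assoc, smul_smul,
      ← pow_succ, mul_assoc]

theorem pow_comm2 (c : k) (x y : B) (h : y * x = c • (x * y)) (b a : ℕ) :
    y ^ b * x ^ a = c ^ (b * a) • (x ^ a * y ^ b) := by
  induction a with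
  | zero => simp
  | succ a ih =>
    rw [pow_succ x, ← mul_assoc, ih, smul_mul_assoc, mul_assoc, pow_comm1 c x y h,
      mul_smul_comm, smul_smul, ← mul_assoc, mul_add, pow_add, mul_one]

theorem q_binom_thm (q : k) (a b : B) (h : b * a = q • (a * b)) (m : ℕ) :
    (a + b) ^ m = ∑ j ∈ Finset.range (m + 1), pas q m j • (a ^ (m - j) * b ^ j) := by
  induction m with
  | zero => simp [pas_zero]
  | succ m ih =>
    have e1 : (∑ j ∈ Finset.range (m + 1), pas q m j • (a ^ (m - j) * b ^ j)) * a
        = ∑ j ∈ Finset.range (m + 2), (q ^ j * pas q m j) • (a ^ (m + 1 - j) * b ^ j) := by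
      rw [Finset.sum_range_succ _ (m+1), pas_gt q m (m+1) (by omega), Finset.sum_mul]
      simp only [mul_zero, zero_smul, add_zero]
      apply Finset.sum_congr rfl
      intro j hj
      rw [Finset.mem_range] at hj
      rw [smul_mul_assoc, mul_assoc, pow_comm1 q a b h, mul_smul_comm, smul_smul, ← mul_assoc,
        ← pow_succ, mul_comm]
      congr 4
      omega
    have e2 : (∑ j ∈ Finset.range (m + 1), pas q m j • (a ^ (m - j) * b ^ j)) * b
        = ∑ j ∈ Finset.range (m + 1), (pas q m j) • (a ^ (m + 1 - (j+1)) * b ^ (j+1)) := by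
      rw [Finset.sum_mul]
      apply Finset.sum_congr rfl
      intro j hj
      rw [smul_mul_assoc, mul_assoc, ← pow_succ]
      congr 3
      omega
    rw [pow_succ, ih, mul_add, e1, e2, Finset.sum_range_succ', Finset.sum_range_succ' _ (m+1)]
    rw [add_right_comm, ← Finset.sum_add_distrib]
    congr 1
    · apply Finset.sum_congr rfl
      intro j hj
      rw [pas_succ, add_smul]
    · simp [pas_zero]

theorem list_prod_sum {ι : Type*} [Fintype ι] (n : ℕ) (f : Fin n → ι → B) :
    ((List.finRange n).map (fun i => ∑ m, f i m)).prod
      = ∑ ξ : Fin n → ι, ((List.finRange n).map (fun i => f i (ξ i))).prod := by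
  induction n with
  | zero => simp
  | succ n ih =>
    rw [← (Fin.consEquiv (fun _ : Fin (n+1) => ι)).sum_comp, Fintype.sum_prod_type]
    simp only [List.finRange_succ, List.map_cons, List.prod_cons, List.map_map, Function.comp_def,
      Fin.consEquiv, Equiv.coe_fn_mk, Fin.cons_zero, Fin.cons_succ]
    rw [ih (fun i => f i.succ), Finset.sum_mul_sum]

theorem list_prod_smul (n : ℕ) (c : Fin n → k) (f : Fin n → B) :
    ((List.finRange n).map (fun i => c i • f i)).prod
      = (∏ i, c i) • ((List.finRange n).map f).prod := by
  induction n with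
  | zero => simp
  | succ n ih =>
    simp only [List.finRange_succ, List.map_cons, List.prod_cons, List.map_map, Function.comp_def,
      Fin.prod_univ_succ]
    rw [ih (fun i => c i.succ) (fun i => f i.succ), smul_mul_smul_comm]

theorem list_prod_tmul (n : ℕ) (f g : Fin n → B) :
    ((List.finRange n).map (fun i => f i ⊗ₜ[k] g i)).prod
      = ((List.finRange n).map f).prod ⊗ₜ[k] ((List.finRange n).map g).prod := by
  induction n with
  | zero => simp [Algebra.TensorProduct.one_def]
  | succ n ih =>
    simp only [List.finRange_succ, List.map_cons, List.prod_cons, List.map_map, Function.comp_def]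
    rw [ih (fun i => f i.succ) (fun i => g i.succ), Algebra.TensorProduct.tmul_mul_tmul]

theorem past_list (n : ℕ) (c : Fin n → k) (y : B) (x : Fin n → B)
    (h : ∀ j, y * x j = c j • (x j * y)) :
    y * ((List.finRange n).map x).prod = (∏ j, c j) • (((List.finRange n).map x).prod * y) := by
  induction n with
  | zero => simp
  | succ n ih =>
    simp only [List.finRange_succ, List.map_cons, List.prod_cons, List.map_map, Function.comp_def,
      Fin.prod_univ_succ]
    rw [← mul_assoc, h, smul_mul_assoc, mul_assoc, ih (fun i => c i.succ) (fun i => x i.succ)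
      (fun j => h _), mul_smul_comm, smul_smul, mul_assoc]

theorem list_split (n : ℕ) (c : Fin n → Fin n → k) (x y : Fin n → B)
    (h : ∀ i j, i < j → y i * x j = c i j • (x j * y i)) :
    ((List.finRange n).map (fun i => x i * y i)).prod
      = (∏ i, ∏ j, if i < j then c i j else 1) •
        (((List.finRange n).map x).prod * ((List.finRange n).map y).prod) := by
  induction n with
  | zero => simp
  | succ n ih =>
    have e := past_list n (fun j => c 0 j.succ) (y 0) (fun j => x j.succ)
      (fun j => h _ _ (Fin.succ_pos j))
    simp only [List.finRange_succ, List.map_cons, List.prod_cons, List.map_map, Function.comp_def,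
      Fin.prod_univ_succ]
    rw [ih (fun i j => c i.succ j.succ) (fun i => x i.succ) (fun i => y i.succ)
      (fun i j hij => h _ _ (Fin.succ_lt_succ_iff.mpr hij))]
    set X := (List.map (fun i : Fin n => x i.succ) (List.finRange n)).prod
    set Y := (List.map (fun i : Fin n => y i.succ) (List.finRange n)).prod
    have e2 : x 0 * y 0 * (X * Y) = (∏ j : Fin n, c 0 j.succ) • (x 0 * X * (y 0 * Y)) := by
      rw [mul_assoc, ← mul_assoc (y 0), e, smul_mul_assoc, mul_smul_comm]
      simp only [mul_assoc]
    rw [mul_smul_comm, e2, smul_smul]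
    congr 1
    simp [Fin.succ_pos, mul_comm]

end comm

section taft
variable {k : Type*} [Field k] {A : Type*} [Ring A] [HopfAlgebra k A] {n ℓ : ℕ} {q : k}
  (T : TaftPresentation k A n ℓ q q)

theorem star_eps (i j : Fin n) : starForm (epsZ i) (epsZ j) = if j < i then 1 else 0 := by
  unfold starForm epsZ
  rw [Finset.sum_eq_single j, Finset.sum_eq_single i]
  · simp
  · intro b _ hb; simp [hb]
  · simp
  · intro b _ hb; simp [hb]
  · simp

theorem theta_lt (i j : Fin n) (h : i < j) : theta q (epsZ i) (epsZ j) = q⁻¹ := by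
  unfold theta
  rw [star_eps, star_eps, if_pos h, if_neg (by omega)]
  simp

theorem zpow_fsum {q : k} (hq0 : q ≠ 0) {ι : Type*} (s : Finset ι) (f : ι → ℤ) :
    q ^ (∑ i ∈ s, f i) = ∏ i ∈ s, q ^ f i := by
  classical
  induction s using Finset.induction_on with
  | empty => simp
  | insert a s ha ih => rw [Finset.sum_insert ha, Finset.prod_insert ha, zpow_add₀ hq0, ih]

theorem K_pow (i : Fin n) (b : ℕ) : T.K (epsZ i) ^ b = T.K ((b : ℤ) • epsZ i) := by
  induction b with
  | zero => simp [T.K_zero]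
  | succ b ih => rw [pow_succ, ih, T.K_add]; congr 1; push_cast; rw [add_smul, one_smul]

theorem K_list (L : List (Fin n → ℤ)) : (L.map T.K).prod = T.K L.sum := by
  induction L with
  | nil => simp [T.K_zero]
  | cons a L ih => simp [ih, T.K_add]

theorem sum_eps (b : Fin n → ℤ) : ((List.finRange n).map (fun i => b i • epsZ i)).sum = b := by
  rw [← List.ofFn_eq_map, List.sum_ofFn]
  ext j
  simp [epsZ]

theorem K_prod (b : Fin n → ℕ) :
    ((List.finRange n).map (fun i => T.K (epsZ i) ^ b i)).prod = T.K (fun i => (b i : ℤ)) := by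
  simp only [K_pow]
  conv_rhs => rw [← sum_eps (fun i => (b i : ℤ)), ← K_list, List.map_map]
  rfl

theorem xK_prod (hq0 : q ≠ 0) (a b : Fin n → ℕ) :
    ((List.finRange n).map (fun i => T.x i ^ a i * T.K (epsZ i) ^ b i)).prod
      = q ^ (-(starForm (fun i => (a i : ℤ)) (fun i => (b i : ℤ)))) •
        (xpow T.x a * T.K (fun i => (b i : ℤ))) := by
  rw [list_split n (fun i j => q⁻¹ ^ (b i * a j)) (fun i => T.x i ^ a i)
    (fun i => T.K (epsZ i) ^ b i), K_prod]
  · unfold xpow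
    congr 1
    unfold starForm
    rw [← Finset.sum_neg_distrib, zpow_fsum hq0]
    apply Finset.prod_congr rfl
    intro i _
    rw [← Finset.sum_neg_distrib, zpow_fsum hq0]
    apply Finset.prod_congr rfl
    intro j _
    by_cases hij : i < j
    · rw [if_pos hij, if_pos (Fin.lt_def.mp hij), inv_pow, zpow_neg, mul_comm (b i)]
      beta_reduce
      norm_cast
    · rw [if_neg hij, if_neg (fun h => hij (Fin.lt_def.mpr h))]
      simp
  · intro i j hij
    apply pow_comm2
    rw [T.K_x, theta_lt i j hij, if_neg hij.ne, mul_one]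

theorem comul_pow (hq : IsPrimitiveRoot q ℓ) (i : Fin n) (m : Fin ℓ) :
    Coalgebra.comul (R := k) (T.x i ^ (m : ℕ)) = ∑ j : Fin ℓ,
      (if (j : ℕ) ≤ m then qBinom q m j else 0) •
        ((T.x i ^ ((m : ℕ) - j) * T.K (epsZ i) ^ (j : ℕ)) ⊗ₜ[k] (T.x i ^ (j : ℕ))) := by
  have hm := m.2
  rw [← Bialgebra.comulAlgHom_apply, map_pow, Bialgebra.comulAlgHom_apply, T.comul_x,
    q_binom_thm q]
  · rw [Fin.sum_univ_eq_sum_range (fun j => (if j ≤ (m : ℕ) then qBinom q m j else 0) •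
        ((T.x i ^ ((m : ℕ) - j) * T.K (epsZ i) ^ (j : ℕ)) ⊗ₜ[k] (T.x i ^ (j : ℕ)))) ℓ]
    rw [← Finset.sum_subset (Finset.range_mono (show (m : ℕ) + 1 ≤ ℓ by omega))]
    · apply Finset.sum_congr rfl
      intro j hj
      rw [Finset.mem_range] at hj
      rw [if_pos (by omega), pas_eq hq _ _ hm (by omega)]
      simp [Algebra.TensorProduct.tmul_pow, Algebra.TensorProduct.tmul_mul_tmul]
    · intro j _ hj
      rw [Finset.mem_range] at hj
      rw [if_neg (by omega), zero_smul]
  · simp only [Algebra.TensorProduct.tmul_mul_tmul, T.K_x]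
    simp [theta, TensorProduct.smul_tmul']

end taft

end TaftAux

/-- the comultiplication formula in the `n`-rank Taft algebra:
`Δ(x^γ K(α)) = Σ_{ξ ≤ γ} (γ choose ξ)_q q^{-(γ-ξ)*ξ} x^{γ-ξ} K(ξ+α) ⊗ x^ξ K(α)`. -/
theorem stmt3 {k : Type*} [Field k] [CharZero k] [IsAlgClosed k]
    {A : Type*} [Ring A] [HopfAlgebra k A] {n ℓ : ℕ} {q : k}
    (hq : IsPrimitiveRoot q ℓ) (hℓ : 1 < ℓ)
    (T : TaftPresentation k A n ℓ q q)
    (γ α : Fin n → Fin ℓ) :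
    Coalgebra.comul (R := k) (T.mono γ α)
      = ∑ ξ : Fin n → Fin ℓ,
          if ∀ i, (ξ i : ℕ) ≤ (γ i : ℕ) then
            ((∏ i, qBinom q (γ i : ℕ) (ξ i : ℕ)) *
              q ^ (-(starForm (fun i => ((γ i : ℕ) : ℤ) - ((ξ i : ℕ) : ℤ))
                      (fun i => ((ξ i : ℕ) : ℤ)))))
              • ((xpow T.x (fun i => (γ i : ℕ) - (ξ i : ℕ))
                    * T.K (fun i => ((ξ i : ℕ) : ℤ) + ((α i : ℕ) : ℤ)))
                  ⊗ₜ[k] T.mono ξ α)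
          else 0 := by
  have hq0 : q ≠ 0 := hq.ne_zero (by omega)
  unfold TaftPresentation.mono
  rw [← Bialgebra.comulAlgHom_apply, map_mul]
  conv_lhs => arg 1; rw [xpow, map_list_prod, List.map_map]
  simp only [Function.comp_def, Bialgebra.comulAlgHom_apply, T.comul_K]
  simp only [TaftAux.comul_pow T hq]
  rw [TaftAux.list_prod_sum, Finset.sum_mul]
  apply Finset.sum_congr rfl
  intro ξ _
  rw [TaftAux.list_prod_smul, TaftAux.list_prod_tmul]
  split_ifs with h
  · rw [TaftAux.xK_prod T hq0 (fun i => (γ i : ℕ) - (ξ i : ℕ)) (fun i => (ξ i : ℕ))]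
    rw [← TensorProduct.smul_tmul', smul_smul, smul_mul_assoc,
      Algebra.TensorProduct.tmul_mul_tmul, mul_assoc, T.K_add]
    congr 1
    congr 1
    · exact Finset.prod_congr rfl (fun i _ => if_pos (h i))
    · congr 3
      ext i
      exact Nat.cast_sub (h i)
  · push Not at h
    obtain ⟨i, hi⟩ := h
    rw [Finset.prod_eq_zero (Finset.mem_univ i) (if_neg (by omega)), zero_smul, zero_mul]
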